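/- Let X and Y be anisotropic quasilinear quadrics of the same dimension over a field k of characteristic 2, both with first Witt index equal to 1, such that X is isotropic over k(Y) and Y is isotropic over k(X). Then X and Y are birational over k. -/

import Mathlib

open MvPolynomial QuadraticMap

/-- The homogeneous degree-2 polynomial representing a quadratic form on `Fin N → k`,
with diagonal coefficients `q(eᵢ)` and off-diagonal coefficients `polar q eᵢ eⱼ`. -/
noncomputable def polyRep {k : Type*} [Field k] {N : ℕ}
    (q : QuadraticForm k (Fin N → k)) : MvPolynomial (Fin N) k :=
  (∑ i : Fin N, C (q (Pi.single i 1)) * X i ^ 2) +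
    ∑ p ∈ Finset.univ.filter (fun p : Fin N × Fin N => p.1 < p.2),
      C (polar q (Pi.single p.1 1) (Pi.single p.2 1)) * X p.1 * X p.2

/-- The value at `w : Fin N → K` of the scalar extension to `K` of a quadratic
form `q` over `k`. -/
noncomputable def extVal {k : Type*} (K : Type*) [Field k] [Field K] [Algebra k K]
    {N : ℕ} (q : QuadraticForm k (Fin N → k)) (w : Fin N → K) : K :=
  aeval w (polyRep q)

/-- `K` together with the "generic point" `ξ` is the function field `k(X)` of the
projective quadric `X = {q = 0} ⊆ ℙⁿ` (in the affine chart where the last homogeneous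
coordinate is `1`): the kernel of evaluation at `ξ` is exactly the ideal generated by
the defining equation of `q` and `X_n - 1`, and `K` is the fraction field of the
subalgebra generated by the coordinates of `ξ`. -/
def IsQuadricFunctionField (k : Type*) {K : Type*} [Field k] [Field K] [Algebra k K]
    {n : ℕ} (q : QuadraticForm k (Fin (n + 1) → k)) (ξ : Fin (n + 1) → K) : Prop :=
  RingHom.ker ((aeval ξ : MvPolynomial (Fin (n + 1)) k →ₐ[k] K) :
      MvPolynomial (Fin (n + 1)) k →+* K) =
    Ideal.span {polyRep q, X (Fin.last n) - 1} ∧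
  IsFractionRing (Algebra.adjoin k (Set.range ξ)) K

/-- The total index of `q` over the extension field `K`: the maximal dimension of a
`K`-linear subspace on which the scalar extension of `q` vanishes identically. -/
noncomputable def totalIndexExt (k K : Type*) [Field k] [Field K] [Algebra k K]
    {N : ℕ} (q : QuadraticForm k (Fin N → k)) : ℕ :=
  sSup {d | ∃ W : Submodule K (Fin N → K),
    (∀ w ∈ W, extVal K q w = 0) ∧ Module.finrank K W = d}

/-!
Let `w` be an isotropic vector of `q` over `k(Y)`, and let `E = k(w) ⊆ k(Y)`. The diagonal form
`∑ aᵢ Xᵢ ^ p` is anisotropic over a field `L` of characteristic exponent `p` if and only if the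
`p`-th roots of the `aᵢ` are linearly independent over `L`. Let `S` be the set of square roots of
the coefficients of `q` and `r`. The degrees of `L(S)` over `L`, for `L = k, E, k(Y)`, are powers
of `2`. The degree drops strictly from `k` to `E`, since `q` becomes isotropic over `E`. As `k(Y)`
has degree at most `2` over a purely transcendental extension of `k`, it drops by a factor of at
most `2` from `k` to `k(Y)`, so not at all from `E` to `k(Y)`. Hence `r` is already isotropic over
`E`. Since `r` has index one over `k(Y)`, its zeros over `E` are proportional to the generic point
of `Y`, and `E = k(Y)`.

Counting transcendence degrees now shows that no coordinate of `w` vanishes, and that, after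
scaling the last one to `1`, the specialization of the generic point of `X` to `w` is injective.
It is therefore an isomorphism `k(X) ≃ k(w) = k(Y)`.
-/

namespace Quasilinear

open IntermediateField Module

section LinearDisjoint

variable {k Ω : Type*} [Field k] [Field Ω] [Algebra k Ω] (A : IntermediateField k Ω)

variable {A} in
theorem linearDisjoint_of_finrank_le_finrank_adjoin [FiniteDimensional k A] {L : Type*} [Field L]
    [Algebra k L] [Algebra L Ω] [IsScalarTower k L Ω]
    (h : finrank k A ≤ finrank L (adjoin L (A : Set Ω))) : A.LinearDisjoint L := by
  refine .of_basis_left (finBasis k A) (linearIndependent_iff_card_le_finrank_span.2 ?_)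
  have hspan : Subalgebra.toSubmodule (adjoin L (A : Set Ω)).toSubalgebra =
      Submodule.span L (Set.range (A.val ∘ finBasis k A)) := by
    rw [adjoin_intermediateField_toSubalgebra_of_isAlgebraic L A (.inr inferInstance)]
    exact A.toSubalgebra.adjoin_eq_span_basis L (finBasis k A)
  rw [Set.finrank, ← hspan, Fintype.card_fin]
  exact h

theorem linearDisjoint_algebraAdjoin_of_algebraicIndependent [Algebra.IsAlgebraic k A] {τ : Type*}
    {x : τ → Ω} (hx : AlgebraicIndependent k x) :
    A.toSubalgebra.LinearDisjoint (Algebra.adjoin k (Set.range x)) := by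
  let monomials := (basisMonomials τ k).map hx.aevalEquiv.toLinearEquiv
  have hxA : LinearIndependent A (aeval (R := A) x ∘ basisMonomials τ A) :=
    (basisMonomials τ A).linearIndependent.map_injOn
      (aeval (R := A) x).toLinearMap (hx.extendScalars A).injOn
  have hmonomials : (Algebra.adjoin k (Set.range x)).val ∘ monomials =
      aeval (R := A) x ∘ basisMonomials τ A := by
    ext m
    simp [monomials, aeval_monomial]
  refine .of_basis_right _ _ monomials ?_
  rw [hmonomials]
  exact hxA

open scoped IntermediateField.algebraAdjoinAdjoin in
theorem linearDisjoint_adjoin_of_algebraicIndependent [Algebra.IsAlgebraic k A] {τ : Type*}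
    {x : τ → Ω} (hx : AlgebraicIndependent k x) :
    A.LinearDisjoint (adjoin k (Set.range x)) := by
  let a := Basis.ofVectorSpace k A
  refine .of_basis_left a ?_
  rw [← LinearIndependent.iff_fractionRing (R := Algebra.adjoin k (Set.range x))]
  exact (linearDisjoint_algebraAdjoin_of_algebraicIndependent A hx).linearIndependent_left_of_flat
    a.linearIndependent

theorem linearDisjoint_adjoin_of_algebraicIndependent_tower [Algebra.IsAlgebraic k A] {K τ : Type*}
    [Field K] [Algebra k K] [Algebra K Ω] [IsScalarTower k K Ω]
    {x : τ → K} (hx : AlgebraicIndependent k x) :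
    A.LinearDisjoint (adjoin k (Set.range x)) := by
  let φ := IsScalarTower.toAlgHom k K Ω
  have hφx := linearDisjoint_adjoin_of_algebraicIndependent A
    (hx.map' (f := φ) (algebraMap K Ω).injective)
  rw [linearDisjoint_iff'] at hφx
  rw [linearDisjoint_iff]
  convert hφx using 1
  rw [Set.range_comp, ← adjoin_map]
  ext y
  simp [φ, IsScalarTower.algebraMap_apply (adjoin k (Set.range x)) K Ω]

variable {S : Set Ω}

theorem linearIndependent_of_finrank_adjoin_le [Finite S] (hS : ∀ s ∈ S, IsIntegral k s) {L : Type*}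
    [Field L] [Algebra k L] [Algebra L Ω] [IsScalarTower k L Ω]
    (hle : finrank k (adjoin k S) ≤ finrank L (adjoin L S)) {ι : Type*} {v : ι → Ω}
    (hvS : ∀ i, v i ∈ S) (hv : LinearIndependent k v) : LinearIndependent L v := by
  have := finiteDimensional_adjoin hS
  rw [← adjoin_adjoin_right L S (K := k)] at hle
  let v' : ι → adjoin k S := fun i ↦ ⟨v i, subset_adjoin k S (hvS i)⟩
  have hv' : LinearIndependent k v' := .of_comp (adjoin k S).val.toLinearMap hv
  exact (linearDisjoint_of_finrank_le_finrank_adjoin hle).linearIndependent_left hv'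

theorem finrank_adjoin_le_mul {F L : Type*} [Field F] [Field L] [Algebra k F] [Algebra F L]
    [Algebra L Ω] [Algebra F Ω] [IsScalarTower k F Ω] [IsScalarTower F L Ω] [FiniteDimensional F L]
    [Finite S] (hS : ∀ s ∈ S, IsIntegral k s) (h : (adjoin k S).LinearDisjoint F) :
    finrank k (adjoin k S) ≤ finrank F L * finrank L (adjoin L S) := by
  have := finiteDimensional_adjoin hS
  have := finiteDimensional_adjoin (K := L) (S := S)
    fun s hs ↦ .tower_top (R := F) (.tower_top (hS s hs))
  have : FiniteDimensional F (adjoin L S) := .trans F L _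
  have hle : adjoin F S ≤ (adjoin L S).restrictScalars F :=
    adjoin_le_iff.2 (subset_adjoin L S)
  calc finrank k (adjoin k S) = finrank F (adjoin F S) := by
        have := h.adjoin_rank_eq_rank_left_of_isAlgebraic_left
        rw [adjoin_adjoin_right] at this
        simp_rw [finrank, this]
    _ ≤ finrank F (adjoin L S) := LinearMap.finrank_le_finrank_of_injective
        (f := (inclusion hle).toLinearMap) (inclusion hle).injective
    _ = finrank F L * finrank L (adjoin L S) := (finrank_mul_finrank _ _ _).symm

end LinearDisjoint

section AlgebraicIndependent

variable {k K L τ : Type*} [CommRing k] [CommRing K] [IsDomain K] [Algebra k K] [CommRing L]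
  [Algebra k L]

theorem injective_of_algebraicIndependent {A : Subalgebra k K} {x : τ → A}
    (hx : IsTranscendenceBasis k (A.val ∘ x)) {f : A →ₐ[k] L}
    (hf : AlgebraicIndependent k (f ∘ x)) : Function.Injective f := by
  let R := Algebra.adjoin k (Set.range (A.val ∘ x))
  have hRA : R ≤ A := Algebra.adjoin_le (by rintro _ ⟨i, rfl⟩; exact (x i).2)
  let : Algebra R A := (Subalgebra.inclusion hRA).toAlgebra
  have : IsScalarTower R A K := .of_algebraMap_eq fun _ ↦ rfl
  have := (algebraMap k K).domain_nontrivial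
  have := hx.isAlgebraic
  rw [injective_iff_map_eq_zero]
  by_contra! hker
  obtain ⟨b, hb, hb0⟩ := hker
  have hbR : IsAlgebraic R b := (isAlgebraic_algebraMap_iff Subtype.val_injective).1
    (Algebra.IsAlgebraic.isAlgebraic (algebraMap A K b))
  refine Ideal.comap_ne_bot_of_algebraic_mem (I := RingHom.ker f) hb0 hb hbR ?_
  rw [eq_bot_iff]
  rintro ⟨r, hr⟩ hfr
  obtain ⟨P, rfl⟩ := (Algebra.adjoin_range_eq_range_aeval k (A.val ∘ x)).le hr
  have hP : aeval (f ∘ x) P = 0 :=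
    calc aeval (f ∘ x) P = f (aeval x P) := (comp_aeval_apply x f P).symm
      _ = f (algebraMap R A ⟨_, hr⟩) := congrArg f (Subtype.ext (comp_aeval_apply x A.val P))
      _ = 0 := hfr
  exact Subtype.ext (by simp [hf.eq_zero_of_aeval_eq_zero P hP])

end AlgebraicIndependent

section PthRoots

variable {p : ℕ} {k K Ω : Type*} [Field k] [Field K] [Field Ω] [Algebra k K] [Algebra k Ω]
  [Algebra K Ω] [IsScalarTower k K Ω] {S : Set Ω}

theorem isIntegral_of_pow_mem_range_algebraMap {s : Ω} (hp : 0 < p)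
    (hs : s ^ p ∈ (algebraMap k Ω).range) : IsIntegral k s := by
  obtain ⟨c, hc⟩ := hs
  exact .of_pow hp (hc ▸ isIntegral_algebraMap)

theorem pow_mem_range_algebraMap_tower {s : Ω}
    (hs : s ^ p ∈ (algebraMap k Ω).range) : s ^ p ∈ (algebraMap K Ω).range := by
  obtain ⟨c, hc⟩ := hs
  exact ⟨algebraMap k K c, by rw [← IsScalarTower.algebraMap_apply, hc]⟩

theorem exists_finrank_adjoin_eq_pow [ExpChar k p] [Finite S]
    (hS : ∀ s ∈ S, s ^ p ∈ (algebraMap k Ω).range) : ∃ m, finrank k (adjoin k S) = p ^ m := by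
  have := finiteDimensional_adjoin fun s hs ↦
    isIntegral_of_pow_mem_range_algebraMap (expChar_pos k p) (hS s hs)
  have : IsPurelyInseparable k (adjoin k S) :=
    (isPurelyInseparable_adjoin_iff_pow_mem k Ω p).2 fun s hs ↦ ⟨1, by simpa using hS s hs⟩
  exact IsPurelyInseparable.finrank_eq_pow _ _ p

theorem not_linearIndependent_intermediateField_of_finrank_le [ExpChar k p]
    {τ : Type*} {x : τ → K} (hx : AlgebraicIndependent k x)
    [FiniteDimensional (adjoin k (Set.range x)) K] (hxK : finrank (adjoin k (Set.range x)) K ≤ p)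
    {ι κ : Type*} [Finite ι] [Finite κ] {α : ι → Ω} {β : κ → Ω}
    (hα : ∀ i, α i ^ p ∈ (algebraMap k Ω).range) (hβ : ∀ i, β i ^ p ∈ (algebraMap k Ω).range)
    (E : IntermediateField k K) (hαk : LinearIndependent k α) (hαE : ¬ LinearIndependent E α)
    (hβK : ¬ LinearIndependent K β) : ¬ LinearIndependent E β := by
  intro hβE
  have : ExpChar E p := expChar_of_injective_algebraMap (algebraMap k E).injective p
  let S := Set.range α ∪ Set.range β
  have hS : ∀ s ∈ S, s ^ p ∈ (algebraMap k Ω).range := by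
    rintro _ (⟨i, rfl⟩ | ⟨i, rfl⟩)
    exacts [hα i, hβ i]
  have hint (s : Ω) (hs : s ∈ S) : IsIntegral k s :=
    isIntegral_of_pow_mem_range_algebraMap (expChar_pos k p) (hS s hs)
  have hEk : finrank E (adjoin E S) < finrank k (adjoin k S) := by
    by_contra! hle
    exact hαE (linearIndependent_of_finrank_adjoin_le hint hle (fun i ↦ .inl ⟨i, rfl⟩) hαk)
  have hKE : finrank K (adjoin K S) < finrank E (adjoin E S) := by
    by_contra! hle
    exact hβK (linearIndependent_of_finrank_adjoin_le (fun s hs ↦ (hint s hs).tower_top) hle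
      (fun i ↦ .inr ⟨i, rfl⟩) hβE)
  have hkK : finrank k (adjoin k S) ≤ p * finrank K (adjoin K S) := by
    have := finiteDimensional_adjoin hint
    exact (finrank_adjoin_le_mul (L := K) hint
      (linearDisjoint_adjoin_of_algebraicIndependent_tower _ hx)).trans (by gcongr)
  obtain ⟨m, hm⟩ := exists_finrank_adjoin_eq_pow (S := S) hS
  obtain ⟨l, hl⟩ := exists_finrank_adjoin_eq_pow (S := S) (k := E) fun s hs ↦
    pow_mem_range_algebraMap_tower (hS s hs)
  have hlm : l + 1 ≤ m := by
    by_contra! hml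
    rw [hl, hm] at hEk
    exact hEk.not_ge (Nat.pow_le_pow_right (expChar_pos k p) (Nat.le_of_lt_succ hml))
  refine hKE.not_ge (le_of_mul_le_mul_left ?_ (expChar_pos k p))
  calc p * finrank E (adjoin E S) = p ^ (l + 1) := by rw [hl, pow_succ']
    _ ≤ p ^ m := Nat.pow_le_pow_right (expChar_pos k p) hlm
    _ = finrank k (adjoin k S) := hm.symm
    _ ≤ p * finrank K (adjoin K S) := hkK

end PthRoots

section DiagForm

variable {k ι : Type*} [Field k] [Fintype ι]

/-- The value at `w` of the diagonal form `∑ aᵢ Xᵢ ^ p`, for `w` with coordinates in an extension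
of `k`. For `p = char k` these are the quasilinear forms of degree `p`. -/
def diagForm {K : Type*} [Field K] [Algebra k K] (p : ℕ) (a : ι → k) (w : ι → K) : K :=
  ∑ i, a i • w i ^ p

/-- The diagonal form `∑ aᵢ Xᵢ ^ p` has no nontrivial zero over the extension `K` of `k`. -/
def AnisotropicOver (K : Type*) [Field K] [Algebra k K] (p : ℕ) (a : ι → k) : Prop :=
  ∀ w : ι → K, diagForm p a w = 0 → w = 0

variable {K : Type*} [Field K] [Algebra k K] {p : ℕ} {a : ι → k}

theorem diagForm_smul (c : K) (w : ι → K) : diagForm p a (c • w) = c ^ p * diagForm p a w := by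
  simp [diagForm, mul_pow, Finset.mul_sum]

theorem diagForm_add [ExpChar K p] (v w : ι → K) :
    diagForm p a (v + w) = diagForm p a v + diagForm p a w := by
  simp [diagForm, add_pow_expChar, Finset.sum_add_distrib]

theorem anisotropicOver_iff_linearIndependent {Ω : Type*} [Field Ω] [Algebra k Ω] [Algebra K Ω]
    [IsScalarTower k K Ω] [ExpChar Ω p] {α : ι → Ω} (hα : ∀ i, α i ^ p = algebraMap k Ω (a i)) :
    AnisotropicOver K p a ↔ LinearIndependent K α := by
  have hpow (w : ι → K) : (∑ i, w i • α i) ^ p = algebraMap K Ω (diagForm p a w) := by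
    simp_rw [diagForm, sum_pow_char p, smul_pow, hα, map_sum, Algebra.smul_def, map_mul, map_pow,
      ← IsScalarTower.algebraMap_apply, mul_comm]
  rw [Fintype.linearIndependent_iff]
  refine forall_congr' fun w ↦ ?_
  rw [← pow_eq_zero_iff (a := ∑ i, w i • α i) (expChar_pos Ω p).ne', hpow, map_eq_zero, funext_iff]
  rfl

theorem not_anisotropicOver_intermediateField [ExpChar k p]
    {τ κ : Type*} [Fintype κ] {b : κ → k} {x : τ → K} (hx : AlgebraicIndependent k x)
    [FiniteDimensional (adjoin k (Set.range x)) K] (hxK : finrank (adjoin k (Set.range x)) K ≤ p)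
    (E : IntermediateField k K) (hak : AnisotropicOver k p a) (haE : ¬ AnisotropicOver E p a)
    (hbK : ¬ AnisotropicOver K p b) : ¬ AnisotropicOver E p b := by
  let Ω := AlgebraicClosure K
  have hp : 0 < p := expChar_pos k p
  have : ExpChar Ω p := expChar_of_injective_algebraMap (algebraMap k Ω).injective p
  choose α hα using fun i ↦ IsAlgClosed.exists_pow_nat_eq (algebraMap k Ω (a i)) hp
  choose β hβ using fun i ↦ IsAlgClosed.exists_pow_nat_eq (algebraMap k Ω (b i)) hp
  rw [anisotropicOver_iff_linearIndependent hα] at hak haE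
  rw [anisotropicOver_iff_linearIndependent hβ] at hbK ⊢
  exact not_linearIndependent_intermediateField_of_finrank_le hx hxK
    (fun i ↦ ⟨a i, (hα i).symm⟩) (fun i ↦ ⟨b i, (hβ i).symm⟩) E hak haE hbK

theorem diagForm_algebraMap {L : Type*} [Field L] [Algebra k L] [Algebra K L] [IsScalarTower k K L]
    (w : ι → K) : diagForm p a (algebraMap K L ∘ w) = algebraMap K L (diagForm p a w) := by
  simp [diagForm, Algebra.smul_def, ← IsScalarTower.algebraMap_apply]

theorem not_anisotropicOver_of_forall_mem {E : IntermediateField k K} {w : ι → K}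
    (hwE : ∀ i, w i ∈ E) (hw0 : w ≠ 0) (hw : diagForm p a w = 0) : ¬ AnisotropicOver E p a := by
  intro haE
  let w' : ι → E := fun i ↦ ⟨w i, hwE i⟩
  have hw' : diagForm p a w' = 0 := (algebraMap E K).injective <| by
    rw [← diagForm_algebraMap, map_zero]
    exact hw
  exact hw0 (funext fun i ↦ congrArg Subtype.val (congrFun (haE w' hw') i))

theorem adjoin_range_eq_top_of_diagForm_eq_zero [ExpChar k p] {τ κ : Type*} [Fintype κ] {b : κ → k}
    {x : τ → K} (hx : AlgebraicIndependent k x) [FiniteDimensional (adjoin k (Set.range x)) K]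
    (hxK : finrank (adjoin k (Set.range x)) K ≤ p)
    {ξ : κ → K} (hξ : diagForm p b ξ = 0) (hξK : adjoin k (Set.range ξ) = ⊤)
    {j : κ} (hξj : ξ j = 1) (hprop : ∀ u : κ → K, diagForm p b u = 0 → ∃ c : K, c • ξ = u)
    (hak : AnisotropicOver k p a) {w : ι → K} (hw0 : w ≠ 0) (hw : diagForm p a w = 0) :
    adjoin k (Set.range w) = ⊤ := by
  let E := adjoin k (Set.range w)
  have haE : ¬ AnisotropicOver E p a :=
    not_anisotropicOver_of_forall_mem (fun i ↦ subset_adjoin k _ ⟨i, rfl⟩) hw0 hw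
  have hbK : ¬ AnisotropicOver K p b := fun hbK ↦ by
    simpa [hξj] using congrFun (hbK ξ hξ) j
  obtain ⟨u, hu, hu0⟩ : ∃ u : κ → E, diagForm p b u = 0 ∧ u ≠ 0 := by
    simpa [AnisotropicOver] using
      not_anisotropicOver_intermediateField hx hxK E hak haE hbK
  obtain ⟨c, hc⟩ := hprop (algebraMap E K ∘ u) (by rw [diagForm_algebraMap, hu, map_zero])
  have hcu (i : κ) : c * ξ i = u i := congrFun hc i
  have hcj : c = u j := by rw [← hcu, hξj, mul_one]
  have hc0 : c ≠ 0 := by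
    rintro rfl
    exact hu0 (funext fun i ↦ Subtype.ext (by simpa using (hcu i).symm))
  rw [eq_top_iff, ← hξK, adjoin_le_iff]
  rintro _ ⟨i, rfl⟩
  rw [← inv_mul_cancel_left₀ hc0 (ξ i), hcu, hcj]
  exact mul_mem (inv_mem (u j).2) (u i).2

theorem exists_ne_of_diagForm_eq_zero (hp : p ≠ 0) {v : ι → K} (hv : diagForm p a v = 0) {j : ι}
    (haj : a j ≠ 0) (hvj : v j ≠ 0) : ∃ i ≠ j, v i ≠ 0 := by
  by_contra! h
  rw [diagForm, Fintype.sum_eq_single j fun i hi ↦ by simp [h i hi, hp]] at hv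
  simp_all

theorem pow_mem_of_diagForm_eq_zero {F : IntermediateField k K} {v : ι → K}
    (hv : diagForm p a v = 0) {i₀ : ι} (ha : a i₀ ≠ 0) (hF : ∀ i ≠ i₀, v i ∈ F) :
    v i₀ ^ p ∈ F := by
  classical
  rw [diagForm, ← Finset.add_sum_erase _ _ (Finset.mem_univ i₀)] at hv
  rw [← inv_smul_smul₀ ha (v i₀ ^ p), eq_neg_of_add_eq_zero_left hv]
  exact F.smul_mem (neg_mem (sum_mem fun i hi ↦
    F.smul_mem (pow_mem (hF i (Finset.ne_of_mem_erase hi)) p)))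

theorem finiteDimensional_and_finrank_le_of_pow_mem {F K : Type*} [Field F] [Field K] [Algebra F K]
    (hp : 0 < p) {y : K} (hy : y ^ p ∈ (algebraMap F K).range) (htop : adjoin F {y} = ⊤) :
    FiniteDimensional F K ∧ finrank F K ≤ p := by
  have hint : IsIntegral F y := isIntegral_of_pow_mem_range_algebraMap hp hy
  obtain ⟨c, hc⟩ := hy
  have hfin := adjoin.finiteDimensional hint
  have hrank := adjoin.finrank hint
  rw [htop] at hfin hrank
  refine ⟨.of_surjective _ (topEquiv (F := F) (E := K)).toLinearEquiv.surjective, ?_⟩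
  rw [← finrank_top', hrank, ← Polynomial.natDegree_X_pow_sub_C (n := p) (r := c)]
  exact Polynomial.natDegree_le_of_dvd (minpoly.dvd F y (by simp [hc]))
    (Polynomial.X_pow_sub_C_ne_zero hp c)

theorem finiteDimensional_and_finrank_le_of_diagForm_eq_zero (hp : 0 < p)
    {F : IntermediateField k K} {v : ι → K} (hv : diagForm p a v = 0)
    (hvK : adjoin k (Set.range v) = ⊤) {i₀ : ι} (ha : a i₀ ≠ 0) (hF : ∀ i ≠ i₀, v i ∈ F) :
    FiniteDimensional F K ∧ finrank F K ≤ p := by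
  refine finiteDimensional_and_finrank_le_of_pow_mem hp (y := v i₀)
    ⟨⟨_, pow_mem_of_diagForm_eq_zero hv ha hF⟩, rfl⟩ ?_
  have hle : adjoin k (Set.range v) ≤ (adjoin F {v i₀}).restrictScalars k := by
    rw [adjoin_le_iff]
    rintro _ ⟨i, rfl⟩
    by_cases hi : i = i₀
    · exact hi ▸ mem_adjoin_simple_self F (v i)
    · exact (adjoin F {v i₀}).algebraMap_mem ⟨v i, hF i hi⟩
  rw [hvK, top_le_iff] at hle
  exact restrictScalars_injective k hle

theorem finiteDimensional_and_finrank_le_adjoin_compl_pair (hp : 0 < p) {v : ι → K}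
    (hv : diagForm p a v = 0) (hvK : adjoin k (Set.range v) = ⊤) {i₀ j : ι} (ha : a i₀ ≠ 0)
    (hvj : v j = 1) :
    FiniteDimensional (adjoin k (Set.range fun i : ({i₀, j}ᶜ : Set ι) ↦ v i)) K ∧
      finrank (adjoin k (Set.range fun i : ({i₀, j}ᶜ : Set ι) ↦ v i)) K ≤ p := by
  refine finiteDimensional_and_finrank_le_of_diagForm_eq_zero hp hv hvK ha fun i hi ↦ ?_
  by_cases hij : i = j
  · rw [hij, hvj]
    exact one_mem _
  · exact subset_adjoin k _ ⟨⟨i, by simp [hi, hij]⟩, rfl⟩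

open scoped IntermediateField.algebraAdjoinAdjoin in
theorem isAlgebraic_algebraAdjoin_of_finiteDimensional_adjoin (T : Set K)
    [FiniteDimensional (adjoin k T) K] : Algebra.IsAlgebraic (Algebra.adjoin k T) K :=
  (IsFractionRing.comap_isAlgebraic_iff (K := adjoin k T)).2 (.of_finite _ _)

theorem trdeg_add_two_le_ncard_support (hp : 0 < p) (ha : ∀ i, a i ≠ 0) {v : ι → K}
    (hv : diagForm p a v = 0) (hvK : adjoin k (Set.range v) = ⊤) {j : ι} (hvj : v j = 1) :
    Algebra.trdeg k K + 2 ≤ (Function.support v).ncard := by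
  obtain ⟨i₀, hi₀, hvi₀⟩ := exists_ne_of_diagForm_eq_zero hp.ne' hv (ha j) (hvj ▸ one_ne_zero)
  let s := Function.support v \ {i₀, j}
  have hF (i : ι) (hi : i ≠ i₀) : v i ∈ adjoin k (v '' s) := by
    by_cases hij : i = j
    · rw [hij, hvj]
      exact one_mem _
    by_cases hvi : v i = 0
    · rw [hvi]
      exact zero_mem _
    exact subset_adjoin k _ ⟨i, ⟨hvi, by simp [hi, hij]⟩, rfl⟩
  have := (finiteDimensional_and_finrank_le_of_diagForm_eq_zero hp hv hvK (ha i₀) hF).1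
  have := isAlgebraic_algebraAdjoin_of_finiteDimensional_adjoin (k := k) (v '' s)
  have hs : s.ncard + 2 = (Function.support v).ncard := by
    rw [← Set.ncard_sdiff_add_ncard_of_subset (s := {i₀, j}) (t := Function.support v),
      Set.ncard_pair hi₀]
    simp [Set.insert_subset_iff, hvi₀, hvj]
  calc Algebra.trdeg k K + 2 ≤ (v '' s).ncard + 2 := by
        rw [Set.cast_ncard (Set.toFinite _)]
        gcongr
        exact Algebra.IsAlgebraic.trdeg_le_cardinalMk k _
    _ ≤ s.ncard + 2 := by
        gcongr
        exact Set.ncard_image_le (Set.toFinite s)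
    _ = _ := by exact_mod_cast hs

theorem ne_zero_of_card_le_trdeg_add_two (hp : 0 < p) (ha : ∀ i, a i ≠ 0) {v : ι → K}
    (hv : diagForm p a v = 0) (hvK : adjoin k (Set.range v) = ⊤) {j : ι} (hvj : v j = 1)
    (hcard : Fintype.card ι ≤ Algebra.trdeg k K + 2) (i : ι) : v i ≠ 0 := by
  have hle : Nat.card ι ≤ (Function.support v).ncard := by
    rw [Nat.card_eq_fintype_card]
    exact_mod_cast hcard.trans (trdeg_add_two_le_ncard_support hp ha hv hvK hvj)
  have huniv := Set.eq_of_subset_of_ncard_le (Set.subset_univ _) (Set.ncard_univ ι ▸ hle)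
  exact Function.mem_support.1 (huniv ▸ Set.mem_univ i)

theorem ncard_compl_pair_add_two {i j : ι} (hij : i ≠ j) :
    ({i, j}ᶜ : Set ι).ncard + 2 = Fintype.card ι := by
  rw [← Set.ncard_pair hij, add_comm, Set.ncard_add_ncard_compl, Nat.card_eq_fintype_card]

theorem algebraicIndepOn_compl_pair_of_card_le_trdeg_add_two (hp : 0 < p) {v : ι → K}
    (hv : diagForm p a v = 0) (hvK : adjoin k (Set.range v) = ⊤) {i₀ j : ι} (ha : a i₀ ≠ 0)
    (hij : i₀ ≠ j) (hvj : v j = 1) (hcard : Fintype.card ι ≤ Algebra.trdeg k K + 2) :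
    AlgebraicIndepOn k v {i₀, j}ᶜ := by
  have := (finiteDimensional_and_finrank_le_adjoin_compl_pair hp hv hvK ha hvj).1
  have := isAlgebraic_algebraAdjoin_of_finiteDimensional_adjoin (k := k)
    (Set.range fun i : ({i₀, j}ᶜ : Set ι) ↦ v i)
  refine (Algebra.IsAlgebraic.isTranscendenceBasis_of_lift_le_trdeg_of_finite k _ ?_).1
  rw [← ncard_compl_pair_add_two hij, Nat.cast_add, Nat.cast_ofNat,
    Cardinal.add_le_add_iff_of_lt_aleph0 Cardinal.ofNat_lt_aleph0] at hcard
  rw [← Set.cast_ncard (Set.toFinite _), Cardinal.lift_natCast]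
  exact Cardinal.nat_le_lift_iff.2 hcard

theorem exists_diagForm_update_eq_zero [DecidableEq ι] [IsAlgClosed K] (hp : 0 < p) {i₀ : ι}
    (ha : a i₀ ≠ 0) (y : ι → K) : ∃ c, diagForm p a (Function.update y i₀ c) = 0 := by
  obtain ⟨c, hc⟩ := IsAlgClosed.exists_pow_nat_eq
    ((a i₀)⁻¹ • -∑ i ∈ Finset.univ.erase i₀, a i • y i ^ p) hp
  refine ⟨c, ?_⟩
  have hy : ∀ i ∈ Finset.univ.erase i₀, a i • Function.update y i₀ c i ^ p = a i • y i ^ p :=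
    fun i hi ↦ by rw [Function.update_of_ne (Finset.ne_of_mem_erase hi)]
  rw [diagForm, ← Finset.add_sum_erase _ _ (Finset.mem_univ i₀), Finset.sum_congr rfl hy,
    Function.update_self, hc, smul_inv_smul₀ ha, neg_add_cancel]

end DiagForm

section QuadraticForm

variable {k : Type*} [Field k] {N : ℕ} {q : QuadraticForm k (Fin N → k)}

/-- The coefficients of the squares in `q`; they determine `q` when `q` is additive. -/
def diagCoeff (q : QuadraticForm k (Fin N → k)) (i : Fin N) : k :=
  q (Pi.single i 1)

theorem diagForm_diagCoeff (hq : ∀ x y, q (x + y) = q x + q y) (w : Fin N → k) :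
    diagForm 2 (diagCoeff q) w = q w := by
  have hsingle (i : Fin N) : q (Pi.single i (w i)) = diagCoeff q i • w i ^ 2 := by
    have hw : (Pi.single i (w i) : Fin N → k) = w i • Pi.single i 1 := by
      rw [← Pi.single_smul, smul_eq_mul, mul_one]
    rw [hw, QuadraticMap.map_smul, diagCoeff, smul_eq_mul, smul_eq_mul, mul_comm, pow_two]
  conv_rhs => rw [← Finset.univ_sum_single w]
  simp_rw [diagForm, ← hsingle]
  exact (map_sum (AddMonoidHom.mk' q hq) _ _).symm

theorem extVal_eq_diagForm (hq : ∀ x y, q (x + y) = q x + q y) {K : Type*} [Field K] [Algebra k K]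
    (w : Fin N → K) : extVal K q w = diagForm 2 (diagCoeff q) w := by
  simp [extVal, polyRep, polar, hq, diagForm, diagCoeff, Algebra.smul_def]

theorem anisotropicOver_diagCoeff (hq : ∀ x y, q (x + y) = q x + q y) (hqa : q.Anisotropic) :
    AnisotropicOver k 2 (diagCoeff q) :=
  fun w hw ↦ hqa w (diagForm_diagCoeff hq w ▸ hw)

theorem diagCoeff_ne_zero (hqa : q.Anisotropic) (i : Fin N) : diagCoeff q i ≠ 0 :=
  fun h ↦ by simpa using hqa _ h

theorem exists_smul_eq_of_totalIndexExt_eq_one {K : Type*} [Field K] [Algebra k K] [CharP K 2]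
    (hq : ∀ x y, q (x + y) = q x + q y) (hi : totalIndexExt k K q = 1) {u v : Fin N → K}
    (hv0 : v ≠ 0) (hv : extVal K q v = 0) (hu : extVal K q u = 0) : ∃ c : K, c • v = u := by
  by_contra! hcon
  have : ExpChar K 2 := .prime Nat.prime_two
  have hli : LinearIndependent K ![v, u] := (LinearIndependent.pair_iff' hv0).2 hcon
  refine hi.not_gt (le_csSup ⟨N, ?_⟩ ⟨Submodule.span K (Set.range ![v, u]), ?_, ?_⟩)
  · rintro d ⟨W, -, rfl⟩
    simpa using Submodule.finrank_le W
  · intro w hw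
    rw [Matrix.range_cons_cons_empty, Submodule.mem_span_pair] at hw
    obtain ⟨c, d, rfl⟩ := hw
    rw [extVal_eq_diagForm hq] at hu hv ⊢
    rw [diagForm_add, diagForm_smul, diagForm_smul, hu, hv, mul_zero, mul_zero, add_zero]
  · rw [finrank_span_eq_card hli, Fintype.card_fin]

end QuadraticForm

end Quasilinear

namespace IsQuadricFunctionField

open Quasilinear IntermediateField Module

variable {k K : Type*} [Field k] [Field K] [Algebra k K] {n : ℕ}
  {q : QuadraticForm k (Fin (n + 1) → k)} {ξ : Fin (n + 1) → K}

theorem adjoin_range_eq_top (h : IsQuadricFunctionField k q ξ) : adjoin k (Set.range ξ) = ⊤ := by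
  have := h.2
  rw [← IsFractionRing.algHom_fieldRange_eq_of_comp_eq_of_range_eq
    (f := AlgHom.id k K) (g := (Algebra.adjoin k (Set.range ξ)).val) rfl (Subalgebra.range_val _)]
  exact AlgHom.fieldRange_eq_top.2 Function.surjective_id

theorem last_eq_one (h : IsQuadricFunctionField k q ξ) : ξ (Fin.last n) = 1 := by
  have hmem : X (Fin.last n) - 1 ∈ RingHom.ker (aeval ξ : _ →ₐ[k] K).toRingHom :=
    h.1 ▸ Ideal.subset_span (by simp)
  simpa [sub_eq_zero] using hmem

theorem extVal_eq_zero (h : IsQuadricFunctionField k q ξ) : extVal K q ξ = 0 :=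
  show polyRep q ∈ RingHom.ker (aeval ξ : _ →ₐ[k] K).toRingHom from
    h.1 ▸ Ideal.subset_span (by simp)

theorem exists_algHom_apply_eq (h : IsQuadricFunctionField k q ξ) {L : Type*} [Field L]
    [Algebra k L] {y : Fin (n + 1) → L} (hy : extVal L q y = 0) (hy1 : y (Fin.last n) = 1) :
    ∃ f : Algebra.adjoin k (Set.range ξ) →ₐ[k] L,
      ∀ i, f ⟨ξ i, Algebra.subset_adjoin ⟨i, rfl⟩⟩ = y i := by
  let π : MvPolynomial (Fin (n + 1)) k →ₐ[k] Algebra.adjoin k (Set.range ξ) :=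
    aeval fun i ↦ ⟨ξ i, Algebra.subset_adjoin ⟨i, rfl⟩⟩
  have hπξ (P) : (π P : K) = aeval ξ P :=
    DFunLike.congr_fun (algHom_ext (f := (Subalgebra.val _).comp π) fun i ↦ by simp [π]) P
  have hπ : Function.Surjective π := by
    rintro ⟨x, hx⟩
    rw [Algebra.adjoin_range_eq_range_aeval] at hx
    obtain ⟨P, rfl⟩ := hx
    exact ⟨P, Subtype.ext (hπξ P)⟩
  have hker : RingHom.ker π.toRingHom ≤ RingHom.ker (aeval y : _ →ₐ[k] L).toRingHom := by
    intro P hP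
    have hPξ : P ∈ Ideal.span {polyRep q, X (Fin.last n) - 1} := by
      rw [← h.1]
      exact (hπξ P).symm.trans (congrArg Subtype.val hP)
    refine Ideal.span_le.2 ?_ hPξ
    rintro _ (rfl | rfl)
    · exact hy
    · simp [hy1]
  refine ⟨π.liftOfSurjective hπ (aeval y) hker, fun i ↦ ?_⟩
  have := π.liftOfSurjective_apply hπ (aeval y) hker (X i)
  simpa [π] using this

theorem algebraicIndepOn_compl_pair (h : IsQuadricFunctionField k q ξ)
    (hq : ∀ x y, q (x + y) = q x + q y) {i₀ : Fin (n + 1)} (hi₀ : i₀ ≠ Fin.last n)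
    (ha : diagCoeff q i₀ ≠ 0) : AlgebraicIndepOn k ξ {i₀, Fin.last n}ᶜ := by
  let R := MvPolynomial (Fin (n + 1)) k
  let Ω := AlgebraicClosure (FractionRing R)
  let x : Fin (n + 1) → Ω := fun i ↦ algebraMap R Ω (X i)
  have hx : AlgebraicIndependent k x := (algebraicIndependent_X _ k).map'
    (f := IsScalarTower.toAlgHom k R Ω) <|
      (algebraMap (FractionRing R) Ω).injective.comp (IsFractionRing.injective R _)
  obtain ⟨c, hc⟩ := exists_diagForm_update_eq_zero two_pos ha (Function.update x (Fin.last n) 1)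
  let y := Function.update (Function.update x (Fin.last n) 1) i₀ c
  have hyx (i : ({i₀, Fin.last n}ᶜ : Set (Fin (n + 1)))) : y i = x i := by
    obtain ⟨i, hi⟩ := i
    simp only [Set.mem_compl_iff, Set.mem_insert_iff, Set.mem_singleton_iff, not_or] at hi
    simp [y, hi]
  obtain ⟨f, hf⟩ := h.exists_algHom_apply_eq (y := y) (by rw [extVal_eq_diagForm hq, hc])
    (by simp [y, hi₀.symm])
  let ξA (i : ({i₀, Fin.last n}ᶜ : Set (Fin (n + 1)))) : Algebra.adjoin k (Set.range ξ) :=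
    ⟨ξ i, Algebra.subset_adjoin ⟨i, rfl⟩⟩
  have hfξ : f ∘ ξA = x ∘ Subtype.val := funext fun i ↦ (hf i).trans (hyx i)
  have hξA : AlgebraicIndependent k ξA := .of_comp f (hfξ ▸ hx.comp _ Subtype.val_injective)
  exact hξA.map' (f := Subalgebra.val _) Subtype.val_injective

theorem isTranscendenceBasis_compl_pair (h : IsQuadricFunctionField k q ξ)
    (hq : ∀ x y, q (x + y) = q x + q y) {i₀ : Fin (n + 1)} (hi₀ : i₀ ≠ Fin.last n)
    (ha : diagCoeff q i₀ ≠ 0) :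
    IsTranscendenceBasis k fun i : ({i₀, Fin.last n}ᶜ : Set (Fin (n + 1))) ↦ ξ i := by
  have := (finiteDimensional_and_finrank_le_adjoin_compl_pair two_pos
    (extVal_eq_diagForm hq ξ ▸ h.extVal_eq_zero) h.adjoin_range_eq_top ha h.last_eq_one).1
  exact isTranscendenceBasis_iff_algebraicIndependent_isAlgebraic.2
    ⟨h.algebraicIndepOn_compl_pair hq hi₀ ha,
      isAlgebraic_algebraAdjoin_of_finiteDimensional_adjoin _⟩

theorem exists_ne_last (h : IsQuadricFunctionField k q ξ) (hq : ∀ x y, q (x + y) = q x + q y)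
    (ha : diagCoeff q (Fin.last n) ≠ 0) : ∃ i, i ≠ Fin.last n := by
  obtain ⟨i, hi, -⟩ := exists_ne_of_diagForm_eq_zero two_ne_zero
    (extVal_eq_diagForm hq ξ ▸ h.extVal_eq_zero) ha (h.last_eq_one ▸ one_ne_zero)
  exact ⟨i, hi⟩

theorem trdeg_add_two (h : IsQuadricFunctionField k q ξ) (hq : ∀ x y, q (x + y) = q x + q y)
    (hqa : q.Anisotropic) : Algebra.trdeg k K + 2 = (n + 1 : ℕ) := by
  obtain ⟨i₀, hi₀⟩ := h.exists_ne_last hq (diagCoeff_ne_zero hqa _)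
  have hbasis := h.isTranscendenceBasis_compl_pair hq hi₀ (diagCoeff_ne_zero hqa i₀)
  have htrdeg : Algebra.trdeg k K = ({i₀, Fin.last n}ᶜ : Set (Fin (n + 1))).ncard := by
    rw [← Cardinal.lift_uzero (Algebra.trdeg k K), ← hbasis.lift_cardinalMk_eq_trdeg,
      ← Set.cast_ncard (Set.toFinite _), Cardinal.lift_natCast]
  have hcard := ncard_compl_pair_add_two hi₀
  rw [Fintype.card_fin] at hcard
  rw [htrdeg]
  exact_mod_cast hcard

theorem adjoin_range_eq_top_of_diagForm_eq_zero [CharP k 2] (h : IsQuadricFunctionField k q ξ)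
    (hq : ∀ x y, q (x + y) = q x + q y) (hqa : q.Anisotropic) (hi : totalIndexExt k K q = 1)
    {ι : Type*} [Fintype ι] {a : ι → k} (ha : AnisotropicOver k 2 a) {w : ι → K} (hw0 : w ≠ 0)
    (hw : diagForm 2 a w = 0) : adjoin k (Set.range w) = ⊤ := by
  have : CharP K 2 := charP_of_injective_algebraMap (algebraMap k K).injective 2
  have : ExpChar k 2 := .prime Nat.prime_two
  obtain ⟨i₀, hi₀⟩ := h.exists_ne_last hq (diagCoeff_ne_zero hqa _)
  have hb : diagCoeff q i₀ ≠ 0 := diagCoeff_ne_zero hqa i₀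
  have hξ0 : ξ ≠ 0 := fun h0 ↦ one_ne_zero (h.last_eq_one.symm.trans (congrFun h0 _))
  have hξ : diagForm 2 (diagCoeff q) ξ = 0 := extVal_eq_diagForm hq ξ ▸ h.extVal_eq_zero
  have hfin := finiteDimensional_and_finrank_le_adjoin_compl_pair two_pos hξ
    h.adjoin_range_eq_top hb h.last_eq_one
  have := hfin.1
  refine Quasilinear.adjoin_range_eq_top_of_diagForm_eq_zero
    (h.algebraicIndepOn_compl_pair hq hi₀ hb) hfin.2 hξ h.adjoin_range_eq_top h.last_eq_one
    (fun u hu ↦ ?_) ha hw0 hw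
  exact exists_smul_eq_of_totalIndexExt_eq_one hq hi hξ0 h.extVal_eq_zero
    (extVal_eq_diagForm hq u ▸ hu)

theorem nonempty_algEquiv (h : IsQuadricFunctionField k q ξ)
    (hq : ∀ x y, q (x + y) = q x + q y) {i₀ : Fin (n + 1)} (hi₀ : i₀ ≠ Fin.last n)
    (ha : diagCoeff q i₀ ≠ 0) {L : Type*} [Field L] [Algebra k L] {w : Fin (n + 1) → L}
    (hw : extVal L q w = 0) (hw1 : w (Fin.last n) = 1) (hwL : adjoin k (Set.range w) = ⊤)
    (hwi : AlgebraicIndepOn k w {i₀, Fin.last n}ᶜ) : Nonempty (K ≃ₐ[k] L) := by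
  have := h.2
  obtain ⟨f, hf⟩ := h.exists_algHom_apply_eq hw hw1
  have hfinj : Function.Injective f := by
    let ξA (i : ({i₀, Fin.last n}ᶜ : Set (Fin (n + 1)))) : Algebra.adjoin k (Set.range ξ) :=
      ⟨ξ i, Algebra.subset_adjoin ⟨i, rfl⟩⟩
    have hfξ : f ∘ ξA = w ∘ Subtype.val := funext fun i ↦ hf i
    exact injective_of_algebraicIndependent (x := ξA)
      (h.isTranscendenceBasis_compl_pair hq hi₀ ha) (hfξ ▸ hwi)
  let g : K →ₐ[k] L := IsFractionRing.liftAlgHom hfinj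
  refine ⟨.ofBijective g ⟨g.injective, ?_⟩⟩
  rw [← AlgHom.fieldRange_eq_top, eq_top_iff, ← hwL, adjoin_le_iff]
  rintro _ ⟨i, rfl⟩
  exact ⟨ξ i, (IsFractionRing.lift_algebraMap hfinj
    ⟨ξ i, Algebra.subset_adjoin ⟨i, rfl⟩⟩).trans (hf i)⟩

end IsQuadricFunctionField

open Quasilinear in
theorem quasilinear_zariski_i1_one_general
    {k KX KY : Type*} [Field k] [CharP k 2] [Field KX] [Algebra k KX]
    [Field KY] [Algebra k KY] {n : ℕ} {q r : QuadraticForm k (Fin (n + 1) → k)}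
    (hq : ∀ x y, q (x + y) = q x + q y) (hr : ∀ x y, r (x + y) = r x + r y)
    (hqa : q.Anisotropic) (hra : r.Anisotropic)
    {ξX : Fin (n + 1) → KX} (hKX : IsQuadricFunctionField k q ξX)
    {ξY : Fin (n + 1) → KY} (hKY : IsQuadricFunctionField k r ξY)
    (hir : totalIndexExt k KY r = 1)
    (hXisoY : ∃ w : Fin (n + 1) → KY, w ≠ 0 ∧ extVal KY q w = 0) :
    Nonempty (KX ≃ₐ[k] KY) := by
  obtain ⟨w, hw0, hw⟩ := hXisoY
  rw [extVal_eq_diagForm hq] at hw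
  have hzero (c : KY) : diagForm 2 (diagCoeff q) (c • w) = 0 := by
    rw [diagForm_smul, hw, mul_zero]
  have htop {c : KY} (hc : c ≠ 0) : IntermediateField.adjoin k (Set.range (c • w)) = ⊤ :=
    hKY.adjoin_range_eq_top_of_diagForm_eq_zero hr hra hir (anisotropicOver_diagCoeff hq hqa)
      (smul_ne_zero hc hw0) (hzero c)
  have hcard : Fintype.card (Fin (n + 1)) ≤ Algebra.trdeg k KY + 2 := by
    rw [hKY.trdeg_add_two hr hra, Fintype.card_fin]
  obtain ⟨j, hwj⟩ := Function.ne_iff.1 hw0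
  have hlast : w (Fin.last n) ≠ 0 := right_ne_zero_of_mul <|
    ne_zero_of_card_le_trdeg_add_two two_pos (diagCoeff_ne_zero hqa) (hzero (w j)⁻¹)
      (htop (inv_ne_zero hwj)) (inv_mul_cancel₀ hwj) hcard (Fin.last n)
  obtain ⟨i₀, hi₀⟩ := hKX.exists_ne_last hq (diagCoeff_ne_zero hqa _)
  exact hKX.nonempty_algEquiv hq hi₀ (diagCoeff_ne_zero hqa i₀)
    ((extVal_eq_diagForm hq _).trans (hzero (w (Fin.last n))⁻¹)) (inv_mul_cancel₀ hlast)
    (htop (inv_ne_zero hlast))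
    (algebraicIndepOn_compl_pair_of_card_le_trdeg_add_two two_pos (hzero _)
      (htop (inv_ne_zero hlast)) (diagCoeff_ne_zero hqa i₀) hi₀ (inv_mul_cancel₀ hlast) hcard)

/-- Let `X` and `Y` be anisotropic quasilinear quadrics of the same
dimension over a field `k` of characteristic 2, both with first Witt index 1, such
that `X` is isotropic over `k(Y)` and `Y` is isotropic over `k(X)`.  Then `X` and
`Y` are birational over `k`, i.e. their function fields are isomorphic as
`k`-algebras.  Here `KX = k(X)` and `KY = k(Y)` are the function fields with generic
points `ξX`, `ξY`. -/
theorem quasilinear_zariski_i1_one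
    (k KX KY : Type*) [Field k] [CharP k 2] [Field KX] [Algebra k KX]
    [Field KY] [Algebra k KY] (n : ℕ) (hn : 1 ≤ n)
    (q r : QuadraticForm k (Fin (n + 1) → k))
    (hq : ∀ x y, q (x + y) = q x + q y) (hr : ∀ x y, r (x + y) = r x + r y)
    (hqa : q.Anisotropic) (hra : r.Anisotropic)
    (ξX : Fin (n + 1) → KX) (hKX : IsQuadricFunctionField k q ξX)
    (ξY : Fin (n + 1) → KY) (hKY : IsQuadricFunctionField k r ξY)
    (hiq : totalIndexExt k KX q = 1) (hir : totalIndexExt k KY r = 1)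
    (hXisoY : ∃ w : Fin (n + 1) → KY, w ≠ 0 ∧ extVal KY q w = 0)
    (hYisoX : ∃ w : Fin (n + 1) → KX, w ≠ 0 ∧ extVal KX r w = 0) :
    Nonempty (KX ≃ₐ[k] KY) :=
  quasilinear_zariski_i1_one_general hq hr hqa hra hKX hKY hir hXisoY
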